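/- Let Z ⊆ ℝ^d be convex and compact, ‖·‖ a norm on ℝ^d with dual norm ‖·‖_*, and ω : Z → ℝ a convex continuous distance-generating function that is 1-strongly convex with respect to ‖·‖ on Z° := {z ∈ Z : ∂ω(z) ≠ ∅}, with set width Ω := max_{z∈Z} ω(z) − min_{z∈Z} ω(z). Let f^1,…,f^T : Z → ℝ be convex with subgradients bounded by G in ‖·‖_*. Then the generalized Mirror Descent iterates z^1 := argmin_{z∈Z} ω(z), z^{t+1} ∈ argmin_{z'∈Z}{⟨γ (1/T)∇f^t(z^t) − ∇ω(z^t), z'⟩ + ω(z')} with γ = √(2ΩT/G²)·(1)… explicitly γ = √(2Ω/((1/T)²G²T)), chosen using only z^t and f^t, satisfy (1/T) Σ_{t=1}^T f^t(z^t) − inf_{z∈Z} (1/T) Σ_{t=1}^T f^t(z) ≤ G √(2Ω/T); in particular the average regret is O(1/√T). -/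

import Mathlib

/-! For the Bregman divergence `D(x, y) = ω y - ω x - ⟨∇ω x, y - x⟩`, optimality of the step from
`x = z t` to `x' = z (t + 1)` along `ℓ = (γ / T) ∇f` gives
`⟨ℓ, x' - w⟩ ≤ D(x, w) - D(x', w) - D(x, x')`. Strong convexity says `‖x - x'‖² / 2 ≤ D(x, x')`,
which absorbs `⟨ℓ, x - x'⟩` up to `(γ G / T)² / 2` by Young's inequality. Summing over `t`
telescopes, and `γ` balances `D(z 1, w) ≤ Ω` against the accumulated Young terms.

Strong convexity is only given as monotonicity of `∇ω` on `Z°`, which need not be convex, and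
minimisers come with some subgradient rather than with `∇ω`. Proximal points repair both defects:
the minimiser `u` of `ω + l ‖· - q‖²` over `Z` lies in `Z°`, tends to `q` as `l → ∞`, and has a
subgradient pointing from `u` to `q`. Hence `Z°` is dense in `Z`, so a continuous selection `∇ω`
dominates every other subgradient in the directions of `Z`. With proximal points near the midpoint
of `x` and `y`, a bound `k ‖x - y‖² ≤ D(x, y)` improves to `k / 2 + 1 / 4`, whose fixed point is
`1 / 2`. -/

open Matrix Finset

/-- The set `Z° = {z ∈ Z : ∂ω(z) ≠ ∅}` of points of `Z` where `ω` admits a subgradient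
(relative to `Z`). -/
def subdiffNonempty {d : ℕ} (Z : Set (Fin d → ℝ)) (ω : (Fin d → ℝ) → ℝ) :
    Set (Fin d → ℝ) :=
  {z ∈ Z | ∃ g : Fin d → ℝ, ∀ z' ∈ Z, ω z + (z' - z) ⬝ᵥ g ≤ ω z'}

open Filter Topology

section Subgradient

variable {E : Type*} [NormedAddCommGroup E] [NormedSpace ℝ E] {Z : Set E} {ω : E → ℝ}
  {gw : E → StrongDual ℝ E} {g : StrongDual ℝ E} {x y : E}

/-- `g` is a subgradient of `ω` at the point `x` of `Z`, relative to `Z`. -/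
def IsSubgradientOn (ω : E → ℝ) (Z : Set E) (g : StrongDual ℝ E) (x : E) : Prop :=
  x ∈ Z ∧ ∀ y ∈ Z, ω x + g (y - x) ≤ ω y

/-- The domain `Z°` of the subdifferential of `ω` relative to `Z`; `subdiffNonempty` in a
normed space. -/
def subdiffDomain (ω : E → ℝ) (Z : Set E) : Set E :=
  {x | ∃ g, IsSubgradientOn ω Z g x}

theorem subdiffDomain_subset : subdiffDomain ω Z ⊆ Z :=
  fun _ ⟨_, hg⟩ => hg.1

/-- The Bregman divergence of `ω` from `x` to `y`, for the choice `gw` of subgradients. -/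
def bregmanDiv (ω : E → ℝ) (gw : E → StrongDual ℝ E) (x y : E) : ℝ :=
  ω y - ω x - gw x (y - x)

theorem bregmanDiv_eq_add (ω : E → ℝ) (gw : E → StrongDual ℝ E) (x u y : E) :
    bregmanDiv ω gw x y =
      bregmanDiv ω gw x u + bregmanDiv ω gw u y + (gw u - gw x) (y - u) := by
  simp only [bregmanDiv, map_sub, _root_.sub_apply]
  ring

theorem IsSubgradientOn.bregmanDiv_nonneg (h : IsSubgradientOn ω Z (gw x) x) (hy : y ∈ Z) :
    0 ≤ bregmanDiv ω gw x y := by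
  have := h.2 y hy
  rw [bregmanDiv]
  linarith

theorem IsSubgradientOn.sub_le (h : IsSubgradientOn ω Z g x) (hy : y ∈ Z) :
    ω x - ω y ≤ g (x - y) := by
  have := h.2 y hy
  rw [← neg_sub, map_neg] at this
  linarith

theorem isSubgradientOn_zero_iff : IsSubgradientOn ω Z 0 x ↔ x ∈ Z ∧ IsMinOn ω Z x := by
  simp [IsSubgradientOn, isMinOn_iff]

theorem isSubgradientOn_neg_of_isMinOn_add {ψ : E → ℝ} {ψ' : StrongDual ℝ E}
    (hω : ConvexOn ℝ Z ω) (hψ : HasFDerivAt ψ ψ' x) (hx : x ∈ Z)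
    (hmin : IsMinOn (fun v => ω v + ψ v) Z x) : IsSubgradientOn ω Z (-ψ') x := by
  refine ⟨hx, fun y hy => ?_⟩
  have hquot : ω x - ω y ≤ ψ' (y - x) := by
    refine ge_of_tendsto (hψ.hasLineDerivAt (y - x)).tendsto_slope_zero_right ?_
    filter_upwards [Ioc_mem_nhdsGT one_pos] with s ⟨hs₀, hs₁⟩
    have hconv := hω.2 hx hy (sub_nonneg.2 hs₁) hs₀.le (sub_add_cancel 1 s)
    have hmin_s := hmin (hω.1.add_smul_sub_mem hx hy ⟨hs₀.le, hs₁⟩)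
    have hseg : (1 - s) • x + s • y = x + s • (y - x) := by module
    simp only [hseg, smul_eq_mul, Set.mem_ofPred_eq] at hconv hmin_s ⊢
    rw [le_inv_mul_iff₀ hs₀]
    linarith
  rw [_root_.neg_apply]
  linarith

theorem mem_closure_setOf_isSubgradientOn [FiniteDimensional ℝ E] (hZ : IsCompact Z)
    (hω : ConvexOn ℝ Z ω) (hωc : ContinuousOn ω Z) {q : E} (hq : q ∈ Z) :
    q ∈ closure {u | ∃ g, IsSubgradientOn ω Z g u ∧ 0 ≤ g (q - u)} := by
  refine Metric.mem_closure_iff.2 fun ε hε => ?_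
  -- The norm of `E` need not be differentiable, so the penalty uses a Euclidean one.
  let A : E ≃L[ℝ] EuclideanSpace ℝ (Fin (Module.finrank ℝ E)) := toEuclidean
  let K : ℝ := ‖A.symm.toContinuousLinearMap‖
  obtain ⟨b, -, hbmin⟩ := hZ.exists_isMinOn ⟨q, hq⟩ hωc
  have hgap : 0 ≤ ω q - ω b := sub_nonneg.2 (hbmin hq)
  let l : ℝ := (K ^ 2 * (ω q - ω b) + 1) / ε ^ 2
  have hl : 0 < l := by positivity
  obtain ⟨u, hu, humin⟩ := hZ.exists_isMinOn ⟨q, hq⟩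
    (f := fun v => ω v + l * ‖A (v - q)‖ ^ 2) (hωc.add (by fun_prop))
  have hderiv := ((A.hasFDerivAt.comp u ((hasFDerivAt_id u).sub_const q)).norm_sq).const_mul l
  refine ⟨u, ⟨_, isSubgradientOn_neg_of_isMinOn_add hω hderiv hu humin, ?_⟩, ?_⟩
  · calc 0 ≤ l * (2 * ‖A (u - q)‖ ^ 2) := by positivity
      _ = _ := by
        rw [← neg_sub u q, map_neg]
        simp [-map_sub, -neg_sub]
  · have hpen : l * ‖A (u - q)‖ ^ 2 ≤ ω q - ω b := by
      have hqu := humin hq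
      have hbu := hbmin hu
      simp only [Set.mem_ofPred_eq, sub_self, map_zero, norm_zero] at hqu hbu
      linarith
    have hdist : dist q u ≤ K * ‖A (u - q)‖ := by
      simpa [dist_eq_norm', K] using A.symm.toContinuousLinearMap.le_opNorm (A (u - q))
    have hlε : l * ε ^ 2 = K ^ 2 * (ω q - ω b) + 1 := div_mul_cancel₀ _ (by positivity)
    have hsq : (K * ‖A (u - q)‖) ^ 2 < ε ^ 2 := by
      refine lt_of_mul_lt_mul_left ?_ hl.le
      have := mul_le_mul_of_nonneg_left hpen (sq_nonneg K)
      linarith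
    exact hdist.trans_lt (lt_of_pow_lt_pow_left₀ 2 hε.le hsq)

theorem subset_closure_subdiffDomain [FiniteDimensional ℝ E] (hZ : IsCompact Z)
    (hω : ConvexOn ℝ Z ω) (hωc : ContinuousOn ω Z) : Z ⊆ closure (subdiffDomain ω Z) :=
  fun _ hq => closure_mono (by rintro u ⟨g, hg, -⟩; exact ⟨g, hg⟩)
    (mem_closure_setOf_isSubgradientOn hZ hω hωc hq)

theorem exists_seq_tendsto_tangent {S : Set E} (hZ : Convex ℝ Z) (hS : Z ⊆ closure S)
    (hx : x ∈ Z) (hy : y ∈ Z) :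
    ∃ s : ℕ → ℝ, ∃ v : ℕ → E, (∀ n, 0 < s n ∧ x + s n • v n ∈ S) ∧
      Tendsto v atTop (𝓝 (y - x)) ∧ Tendsto (fun n => x + s n • v n) atTop (𝓝 x) := by
  let s : ℕ → ℝ := fun n => 1 / ((n : ℝ) + 1)
  have hs₀ : ∀ n, 0 < s n := fun n => by positivity
  have hs₁ : ∀ n, s n ≤ 1 := fun n => div_le_one_of_le₀ (by simp) (by positivity)
  have hs : Tendsto s atTop (𝓝 0) := tendsto_one_div_add_atTop_nhds_zero_nat
  have hnear : ∀ n, ∃ u ∈ S, dist (x + s n • (y - x)) u < s n * s n := fun n =>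
    Metric.mem_closure_iff.1 (hS (hZ.add_smul_sub_mem hx hy ⟨(hs₀ n).le, hs₁ n⟩)) _
      (mul_pos (hs₀ n) (hs₀ n))
  choose u huS hu using hnear
  have hsv : ∀ n, x + s n • (s n)⁻¹ • (u n - x) = u n := fun n => by
    rw [smul_inv_smul₀ (hs₀ n).ne', add_sub_cancel]
  have hv : Tendsto (fun n => (s n)⁻¹ • (u n - x)) atTop (𝓝 (y - x)) := by
    refine tendsto_iff_dist_tendsto_zero.2 (squeeze_zero (fun _ => dist_nonneg) (fun n => ?_) hs)
    refine le_of_mul_le_mul_left ?_ (hs₀ n)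
    calc s n * dist ((s n)⁻¹ • (u n - x)) (y - x)
        = dist (s n • (s n)⁻¹ • (u n - x)) (s n • (y - x)) := by
          rw [dist_smul₀, Real.norm_of_nonneg (hs₀ n).le]
      _ = dist (x + s n • (y - x)) (u n) := by
          rw [← dist_add_left x, hsv, dist_comm]
      _ ≤ s n * s n := (hu n).le
  refine ⟨s, _, fun n => ⟨hs₀ n, by rw [hsv]; exact huS n⟩, hv, ?_⟩
  simpa using (hs.smul hv).const_add x

/-- By monotonicity, `g` is dominated by `gw u` in the direction `u - x` for every `u ∈ Z°`;
let `u` tend to `x` tangentially to `y - x`. -/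
theorem IsSubgradientOn.apply_sub_le_of_continuousOn (hZ : Convex ℝ Z)
    (hdense : Z ⊆ closure (subdiffDomain ω Z))
    (hgw : ∀ u ∈ subdiffDomain ω Z, IsSubgradientOn ω Z (gw u) u)
    (hgwc : ContinuousOn gw (subdiffDomain ω Z))
    (hg : IsSubgradientOn ω Z g x) (hy : y ∈ Z) : g (y - x) ≤ gw x (y - x) := by
  obtain ⟨s, v, hsv, hv, hu⟩ := exists_seq_tendsto_tangent hZ hdense hg.1 hy
  have hgwu : Tendsto (fun n => gw (x + s n • v n)) atTop (𝓝 (gw x)) :=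
    (hgwc x ⟨g, hg⟩).tendsto.comp
      (tendsto_nhdsWithin_iff.2 ⟨hu, Eventually.of_forall fun n => (hsv n).2⟩)
  have hlim : Tendsto (fun n => gw (x + s n • v n) (v n)) atTop (𝓝 (gw x (y - x))) :=
    (isBoundedBilinearMap_apply.continuous.tendsto (gw x, y - x)).comp (hgwu.prodMk_nhds hv)
  refine le_of_tendsto_of_tendsto' ((g.continuous.tendsto _).comp hv) hlim fun n => ?_
  obtain ⟨hs, huS⟩ := hsv n
  have hxu := hg.2 _ (hgw _ huS).1
  have hux := (hgw _ huS).sub_le hg.1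
  simp only [add_sub_cancel_left, map_smul, smul_eq_mul] at hxu hux
  refine le_of_mul_le_mul_left (?_ : s n * g (v n) ≤ s n * gw (x + s n • v n) (v n)) hs
  linarith

end Subgradient

section MirrorDescent

variable {E : Type*} [NormedAddCommGroup E] [NormedSpace ℝ E]
  {p : Seminorm ℝ E} {Z : Set E} {ω : E → ℝ} {gw : E → StrongDual ℝ E} {x y : E}

/-- `ω` is a distance-generating function on `Z`, 1-strongly convex with respect to `p`. The
gradient of `ω` is encoded as a continuous selection `gw` of subgradients on `Z°`. -/
structure IsDistanceGenerating (p : Seminorm ℝ E) (Z : Set E) (ω : E → ℝ)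
    (gw : E → StrongDual ℝ E) : Prop where
  convexOn : ConvexOn ℝ Z ω
  continuousOn : ContinuousOn ω Z
  isSubgradientOn : ∀ x ∈ subdiffDomain ω Z, IsSubgradientOn ω Z (gw x) x
  continuousOn_subgradient : ContinuousOn gw (subdiffDomain ω Z)
  sq_le : ∀ x ∈ subdiffDomain ω Z, ∀ y ∈ subdiffDomain ω Z,
    p (x - y) ^ 2 ≤ (gw x - gw y) (x - y)

/-- `x'` is a Mirror Descent iterate following `x`, for the linear loss `ℓ` (which includes the
step size). -/
def IsMirrorStep (Z : Set E) (ω : E → ℝ) (gw : E → StrongDual ℝ E) (ℓ : StrongDual ℝ E)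
    (x x' : E) : Prop :=
  x' ∈ Z ∧ IsMinOn (fun v => (ℓ - gw x) v + ω v) Z x'

namespace IsDistanceGenerating

variable [FiniteDimensional ℝ E]

theorem apply_sub_le (h : IsDistanceGenerating p Z ω gw) (hZ : IsCompact Z) {g : StrongDual ℝ E}
    (hg : IsSubgradientOn ω Z g x) (hy : y ∈ Z) : g (y - x) ≤ gw x (y - x) :=
  hg.apply_sub_le_of_continuousOn h.convexOn.1
    (subset_closure_subdiffDomain hZ h.convexOn h.continuousOn) h.isSubgradientOn
    h.continuousOn_subgradient hy

theorem half_add_quarter_mul_sq_le_bregmanDiv (h : IsDistanceGenerating p Z ω gw)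
    (hZ : IsCompact Z) {k : ℝ}
    (hk : ∀ x ∈ subdiffDomain ω Z, ∀ y ∈ Z, k * p (x - y) ^ 2 ≤ bregmanDiv ω gw x y)
    (hx : x ∈ subdiffDomain ω Z) (hy : y ∈ Z) :
    (k / 2 + 1 / 4) * p (x - y) ^ 2 ≤ bregmanDiv ω gw x y := by
  let m : E := (1 / 2 : ℝ) • x + (1 / 2 : ℝ) • y
  have hxZ : x ∈ Z := subdiffDomain_subset hx
  have hm : m ∈ Z := h.convexOn.1 hxZ hy (by norm_num) (by norm_num) (by norm_num)
  let F : E → ℝ := fun u =>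
    k * p (x - u) ^ 2 + k * p (u - y) ^ 2 + p (u - x) ^ 2 - 2 * gw x (m - u)
  have hpc : Continuous p := continuousOn_univ.1 (p.convexOn.continuousOn isOpen_univ)
  have hF : Continuous F := by fun_prop
  have hFu : ∀ u g, IsSubgradientOn ω Z g u → 0 ≤ g (m - u) → F u ≤ bregmanDiv ω gw x y := by
    intro u g hg hgm
    have huS : u ∈ subdiffDomain ω Z := ⟨g, hg⟩
    have hgw_nonneg : 0 ≤ gw u (m - u) := hgm.trans (h.apply_sub_le hZ hg hm)
    have hsplit : (gw u - gw x) (y - u) = (gw u - gw x) (u - x) + 2 * (gw u - gw x) (m - u) := by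
      have : y - u = (u - x) + (2 : ℝ) • (m - u) := by simp only [m]; module
      rw [this, map_add, map_smul, smul_eq_mul]
    rw [bregmanDiv_eq_add ω gw x u y, hsplit, _root_.sub_apply _ _ (m - u)]
    linarith [hk x hx u hg.1, hk u huS y hy, h.sq_le u huS x hx]
  have hFm : F m ≤ bregmanDiv ω gw x y :=
    closure_minimal (by rintro u ⟨g, hg, hgm⟩; exact hFu u g hg hgm)
      (isClosed_le hF continuous_const)
      (mem_closure_setOf_isSubgradientOn hZ h.convexOn h.continuousOn hm)
  have hpx : p (x - m) = p (x - y) / 2 := by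
    have : x - m = (1 / 2 : ℝ) • (x - y) := by simp only [m]; module
    rw [this, map_smul_eq_mul, Real.norm_of_nonneg (by norm_num), one_div_mul_eq_div]
  have hpy : p (m - y) = p (x - y) / 2 := by
    have : m - y = (1 / 2 : ℝ) • (x - y) := by simp only [m]; module
    rw [this, map_smul_eq_mul, Real.norm_of_nonneg (by norm_num), one_div_mul_eq_div]
  simp only [F, map_sub_rev p m x, hpx, hpy, sub_self, map_zero] at hFm
  linarith

theorem sq_div_two_le_bregmanDiv (h : IsDistanceGenerating p Z ω gw) (hZ : IsCompact Z)
    (hx : x ∈ subdiffDomain ω Z) (hy : y ∈ Z) : p (x - y) ^ 2 / 2 ≤ bregmanDiv ω gw x y := by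
  have hiter : ∀ n : ℕ, ∀ x ∈ subdiffDomain ω Z, ∀ y ∈ Z,
      (1 / 2 - 1 / 2 * (1 / 2 : ℝ) ^ n) * p (x - y) ^ 2 ≤ bregmanDiv ω gw x y := by
    intro n
    induction n with
    | zero =>
      intro x hx y hy
      simpa using (h.isSubgradientOn x hx).bregmanDiv_nonneg hy
    | succ n ih =>
      intro x hx y hy
      refine (le_of_eq ?_).trans (h.half_add_quarter_mul_sq_le_bregmanDiv hZ ih hx hy)
      ring
  have hpow : Tendsto (fun n : ℕ => (1 / 2 : ℝ) ^ n) atTop (𝓝 0) :=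
    tendsto_pow_atTop_nhds_zero_of_lt_one (by norm_num) (by norm_num)
  have hlim := le_of_tendsto'
    (((hpow.const_mul (1 / 2)).const_sub (1 / 2)).mul_const (p (x - y) ^ 2))
    fun n => hiter n x hx y hy
  linarith

theorem bregmanDiv_le_sub_of_isMinOn (h : IsDistanceGenerating p Z ω gw) (hZ : IsCompact Z)
    (hx : x ∈ Z) (hmin : IsMinOn ω Z x) (hy : y ∈ Z) : bregmanDiv ω gw x y ≤ ω y - ω x :=
  sub_le_self _ (h.apply_sub_le hZ (isSubgradientOn_zero_iff.2 ⟨hx, hmin⟩) hy)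

theorem apply_sub_eq_zero_of_isMinOn (h : IsDistanceGenerating p Z ω gw) (hZ : IsCompact Z)
    (hx : x ∈ Z) (hxmin : IsMinOn ω Z x) (hy : y ∈ Z) (hymin : IsMinOn ω Z y) :
    p (x - y) = 0 := by
  have hstrong := h.sq_div_two_le_bregmanDiv hZ ⟨0, isSubgradientOn_zero_iff.2 ⟨hx, hxmin⟩⟩ hy
  have hdiv := h.bregmanDiv_le_sub_of_isMinOn hZ hx hxmin hy
  have hyx : ω y ≤ ω x := hymin hx
  exact pow_eq_zero_iff two_ne_zero |>.1 (le_antisymm (by linarith) (sq_nonneg _))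

end IsDistanceGenerating

theorem IsMirrorStep.isSubgradientOn {ℓ : StrongDual ℝ E} {x' : E}
    (hstep : IsMirrorStep Z ω gw ℓ x x') (hω : ConvexOn ℝ Z ω) :
    IsSubgradientOn ω Z (gw x - ℓ) x' := by
  rw [← neg_sub]
  exact isSubgradientOn_neg_of_isMinOn_add hω (ℓ - gw x).hasFDerivAt hstep.1
    (by simpa only [add_comm] using hstep.2)

theorem IsMirrorStep.apply_sub_le [FiniteDimensional ℝ E] {ℓ : StrongDual ℝ E} {x' w : E} {c : ℝ}
    (hstep : IsMirrorStep Z ω gw ℓ x x') (h : IsDistanceGenerating p Z ω gw) (hZ : IsCompact Z)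
    (hx : x ∈ subdiffDomain ω Z) (hw : w ∈ Z) (hℓ : ∀ v, ℓ v ≤ c * p v) :
    ℓ (x - w) ≤ bregmanDiv ω gw x w - bregmanDiv ω gw x' w + c ^ 2 / 2 := by
  have hopt := h.apply_sub_le hZ (hstep.isSubgradientOn h.convexOn) hw
  have hthree := bregmanDiv_eq_add ω gw x x' w
  have hstrong := h.sq_div_two_le_bregmanDiv hZ hx hstep.1
  have hyoung : ℓ (x - x') ≤ c ^ 2 / 2 + p (x - x') ^ 2 / 2 := by
    linarith [hℓ (x - x'), two_mul_le_add_sq c (p (x - x'))]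
  simp only [_root_.sub_apply, map_sub] at hopt hthree hyoung ⊢
  linarith

/-- `z 1, …, z (T + 1)` are the Mirror Descent iterates for the linear losses `ℓ 1, …, ℓ T` (which
include the step size). -/
structure IsMirrorDescent (Z : Set E) (ω : E → ℝ) (gw : E → StrongDual ℝ E)
    (ℓ : ℕ → StrongDual ℝ E) (z : ℕ → E) (T : ℕ) : Prop where
  mem_one : z 1 ∈ Z
  isMinOn_one : IsMinOn ω Z (z 1)
  step : ∀ t ∈ Icc 1 T, IsMirrorStep Z ω gw (ℓ t) (z t) (z (t + 1))

namespace IsMirrorDescent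

variable {ℓ : ℕ → StrongDual ℝ E} {z : ℕ → E} {T : ℕ}

theorem mem_subdiffDomain (hz : IsMirrorDescent Z ω gw ℓ z T) (hω : ConvexOn ℝ Z ω) {t : ℕ}
    (ht : t ∈ Icc 1 (T + 1)) : z t ∈ subdiffDomain ω Z := by
  obtain ⟨h₁, hT⟩ := Finset.mem_Icc.1 ht
  obtain ⟨s, rfl⟩ := Nat.exists_eq_add_of_le' h₁
  rcases s.eq_zero_or_pos with rfl | hs
  · exact ⟨0, isSubgradientOn_zero_iff.2 ⟨hz.mem_one, hz.isMinOn_one⟩⟩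
  · exact ⟨_, (hz.step s (Finset.mem_Icc.2 ⟨hs, by lia⟩)).isSubgradientOn hω⟩

theorem sum_apply_sub_le [FiniteDimensional ℝ E] (hz : IsMirrorDescent Z ω gw ℓ z T)
    (h : IsDistanceGenerating p Z ω gw) (hZ : IsCompact Z) {c : ℕ → ℝ}
    (hℓ : ∀ t ∈ Icc 1 T, ∀ v, ℓ t v ≤ c t * p v) {w : E} (hw : w ∈ Z) :
    ∑ t ∈ Icc 1 T, ℓ t (z t - w) ≤ ω w - ω (z 1) + ∑ t ∈ Icc 1 T, c t ^ 2 / 2 := by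
  let D : ℕ → ℝ := fun t => bregmanDiv ω gw (z t) w
  have hone : ∀ t ∈ Icc 1 T, ℓ t (z t - w) ≤ c t ^ 2 / 2 - (D (t + 1) - D t) := by
    intro t ht
    have htS := hz.mem_subdiffDomain h.convexOn (Icc_subset_Icc_right T.le_succ ht)
    linarith [(hz.step t ht).apply_sub_le h hZ htS hw (hℓ t ht)]
  have htelescope : ∑ t ∈ Icc 1 T, (D (t + 1) - D t) = D (T + 1) - D 1 := by
    rw [← Ico_add_one_right_eq_Icc, sum_Ico_sub D (by lia)]
  have hfirst : D 1 ≤ ω w - ω (z 1) :=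
    h.bregmanDiv_le_sub_of_isMinOn hZ hz.mem_one hz.isMinOn_one hw
  have hlast : 0 ≤ D (T + 1) :=
    (h.isSubgradientOn _ (hz.mem_subdiffDomain h.convexOn
      (right_mem_Icc.2 (by lia)))).bregmanDiv_nonneg hw
  have hsum := sum_le_sum hone
  rw [sum_sub_distrib, htelescope] at hsum
  linarith

theorem sum_apply_sub_le_of_const_stepSize [FiniteDimensional ℝ E] {g : ℕ → StrongDual ℝ E}
    {η G : ℝ} (hz : IsMirrorDescent Z ω gw (fun t => η • g t) z T)
    (h : IsDistanceGenerating p Z ω gw) (hZ : IsCompact Z) (hη : 0 < η)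
    (hg : ∀ t ∈ Icc 1 T, ∀ v, g t v ≤ G * p v) {w : E} (hw : w ∈ Z) :
    ∑ t ∈ Icc 1 T, g t (z t - w) ≤ (ω w - ω (z 1)) / η + T * (η * G ^ 2 / 2) := by
  have hℓ : ∀ t ∈ Icc 1 T, ∀ v, (η • g t) v ≤ η * G * p v := fun t ht v => by
    rw [mul_assoc]
    exact mul_le_mul_of_nonneg_left (hg t ht v) hη.le
  have hsum := hz.sum_apply_sub_le h hZ hℓ hw
  simp only [_root_.smul_apply, smul_eq_mul, ← mul_sum, sum_const, Nat.card_Icc,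
    add_tsub_cancel_right, nsmul_eq_mul] at hsum
  refine le_of_mul_le_mul_left (hsum.trans_eq ?_) hη
  field_simp

end IsMirrorDescent

theorem stepSize_div_eq {G T Om : ℝ} (hG : 0 < G) (hT : 0 < T) :
    √(2 * Om / ((1 / T) ^ 2 * G ^ 2 * T)) * (1 / T) = √(2 * Om / T) / G := by
  have : 2 * Om / ((1 / T) ^ 2 * G ^ 2 * T) = 2 * Om / T * (T / G) ^ 2 := by field_simp
  rw [this, Real.sqrt_mul' _ (sq_nonneg _), Real.sqrt_sq (by positivity)]
  field_simp

theorem sum_sub_sum_le_sum_apply_sub {ι : Type*} {s : Finset ι} {f : ι → E → ℝ}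
    {g : ι → StrongDual ℝ E} {z : ι → E} {w : E}
    (hg : ∀ t ∈ s, IsSubgradientOn (f t) Z (g t) (z t)) (hw : w ∈ Z) :
    ∑ t ∈ s, f t (z t) - ∑ t ∈ s, f t w ≤ ∑ t ∈ s, g t (z t - w) := by
  rw [← sum_sub_distrib]
  exact sum_le_sum fun t ht => (hg t ht).sub_le hw

theorem mirror_descent_average_regret_general [FiniteDimensional ℝ E]
    (h : IsDistanceGenerating p Z ω gw) (hZ : IsCompact Z) {Om : ℝ}
    (hOm : ∀ x ∈ Z, ∀ y ∈ Z, ω x - ω y ≤ Om) {T : ℕ} (hT : 1 ≤ T) {f : ℕ → E → ℝ}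
    {g : ℕ → StrongDual ℝ E} {G : ℝ} (hG : 0 < G) (hgG : ∀ t ∈ Icc 1 T, ∀ v, g t v ≤ G * p v)
    {γ : ℝ} (hγ : γ = √(2 * Om / ((1 / (T : ℝ)) ^ 2 * G ^ 2 * T))) {z : ℕ → E}
    (hg : ∀ t ∈ Icc 1 T, IsSubgradientOn (f t) Z (g t) (z t))
    (hz : IsMirrorDescent Z ω gw (fun t => γ • (1 / (T : ℝ)) • g t) z T) {w : E} (hw : w ∈ Z) :
    1 / (T : ℝ) * ∑ t ∈ Icc 1 T, f t (z t) - 1 / (T : ℝ) * ∑ t ∈ Icc 1 T, f t w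
      ≤ G * √(2 * Om / T) := by
  have hT₀ : (0 : ℝ) < T := by exact_mod_cast hT
  have hOm₀ : 0 ≤ Om := by simpa using hOm w hw w hw
  rw [← mul_sub, one_div_mul_eq_div, div_le_iff₀ hT₀]
  refine (sum_sub_sum_le_sum_apply_sub hg hw).trans ?_
  rcases hOm₀.eq_or_lt with rfl | hOm₀
  · have hmin : ∀ x ∈ Z, IsMinOn ω Z x := fun x hx y hy => sub_nonpos.1 (hOm x hx y hy)
    have hzero : ∀ t ∈ Icc 1 T, g t (z t - w) ≤ 0 := fun t ht => by
      have hzt := (hg t ht).1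
      simpa [h.apply_sub_eq_zero_of_isMinOn hZ hzt (hmin _ hzt) hw (hmin w hw)] using
        hgG t ht (z t - w)
    simpa using sum_nonpos hzero
  · set a : ℝ := √(2 * Om / T) with ha
    have ha₀ : 0 < a := by positivity
    have hasq : a ^ 2 * T = 2 * Om := by
      rw [Real.sq_sqrt (by positivity), div_mul_cancel₀ _ hT₀.ne']
    simp only [smul_smul, hγ, stepSize_div_eq hG hT₀, ← ha] at hz
    calc ∑ t ∈ Icc 1 T, g t (z t - w)
        ≤ (ω w - ω (z 1)) / (a / G) + T * (a / G * G ^ 2 / 2) :=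
          hz.sum_apply_sub_le_of_const_stepSize h hZ (by positivity) hgG hw
      _ ≤ Om / (a / G) + T * (a / G * G ^ 2 / 2) := by
          gcongr
          exact hOm w hw _ hz.mem_one
      _ = G * a * T := by
          field_simp
          linarith

end MirrorDescent

section Coordinates

theorem exists_forall_apply_le_mul {V : Type*} [AddCommGroup V] [Module ℝ V] [FiniteDimensional ℝ V]
    {p : Seminorm ℝ V} (hp : ∀ u, p u = 0 → u = 0) (φ : V →ₗ[ℝ] ℝ) :
    ∃ C : ℝ, ∀ u, φ u ≤ C * p u := by
  let _ : Norm V := ⟨p⟩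
  have core : NormedSpace.Core ℝ V :=
    { norm_nonneg := apply_nonneg p
      norm_smul := map_smul_eq_mul p
      norm_triangle := map_add_le_add p
      norm_eq_zero_iff u := ⟨hp u, fun hu => hu ▸ map_zero p⟩ }
  let _ : NormedAddCommGroup V := NormedAddCommGroup.ofCore core
  let _ : NormedSpace ℝ V := NormedSpace.ofCore core
  exact ⟨‖φ.toContinuousLinearMap‖, fun u =>
    (le_abs_self _).trans (φ.toContinuousLinearMap.le_opNorm u)⟩

theorem apply_le_mul_of_sSup_le {V : Type*} [AddCommGroup V] [Module ℝ V] [FiniteDimensional ℝ V]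
    {p : Seminorm ℝ V} (hp : ∀ u, p u = 0 → u = 0) {φ : V →ₗ[ℝ] ℝ} {G : ℝ}
    (hG : sSup {r | ∃ w, p w ≤ 1 ∧ r = φ w} ≤ G) (u : V) : φ u ≤ G * p u := by
  obtain ⟨C, hC⟩ := exists_forall_apply_le_mul hp φ
  have hbdd : BddAbove {r | ∃ w, p w ≤ 1 ∧ r = φ w} := by
    refine ⟨|C|, ?_⟩
    rintro r ⟨w, hw, rfl⟩
    calc φ w ≤ C * p w := hC w
      _ ≤ |C| * p w := mul_le_mul_of_nonneg_right (le_abs_self C) (apply_nonneg p w)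
      _ ≤ |C| := mul_le_of_le_one_right (abs_nonneg C) hw
  rcases (apply_nonneg p u).eq_or_lt with hu | hu
  · simp [hp u hu.symm]
  · have hunit : φ ((p u)⁻¹ • u) ≤ G :=
      (le_csSup hbdd ⟨_, by simp [map_smul_eq_mul, abs_of_pos hu, hu.ne'], rfl⟩).trans hG
    rwa [map_smul, smul_eq_mul, inv_mul_le_iff₀ hu, mul_comm] at hunit

theorem sub_le_sSup_image_sub_sInf_image {X : Type*} [TopologicalSpace X] {Z : Set X} {ω : X → ℝ}
    (hZ : IsCompact Z) (hω : ContinuousOn ω Z) {x y : X} (hx : x ∈ Z) (hy : y ∈ Z) :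
    ω x - ω y ≤ sSup (ω '' Z) - sInf (ω '' Z) :=
  sub_le_sub (le_csSup (hZ.bddAbove_image hω) (Set.mem_image_of_mem ω hx))
    (csInf_le (hZ.bddBelow_image hω) (Set.mem_image_of_mem ω hy))

/-- The identification of a vector `g` with the functional `g ⬝ᵥ ·` on `ℝ^ι`. -/
noncomputable def dotProductDual (ι : Type*) [Fintype ι] [DecidableEq ι] :
    (ι → ℝ) ≃ₗ[ℝ] StrongDual ℝ (ι → ℝ) :=
  (dotProductEquiv ℝ ι).trans LinearMap.toContinuousLinearMap

variable {ι : Type*} [Fintype ι] [DecidableEq ι]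

theorem dotProductDual_apply (g v : ι → ℝ) :
    dotProductDual ι g v = g ⬝ᵥ v := rfl

theorem dotProductDual_apply_le_of_sSup_le {p : Seminorm ℝ (ι → ℝ)}
    (hp : ∀ u, p u = 0 → u = 0) {g : ι → ℝ} {G : ℝ}
    (hG : sSup {r | ∃ w, p w ≤ 1 ∧ r = w ⬝ᵥ g} ≤ G) (u : ι → ℝ) :
    dotProductDual ι g u ≤ G * p u := by
  simp only [dotProduct_comm _ g] at hG
  exact apply_le_mul_of_sSup_le hp (φ := dotProductEquiv ℝ ι g) hG u

theorem isSubgradientOn_dotProductDual_iff {Z : Set (ι → ℝ)} {φ : (ι → ℝ) → ℝ}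
    {g x : ι → ℝ} :
    IsSubgradientOn φ Z (dotProductDual ι g) x ↔
      x ∈ Z ∧ ∀ y ∈ Z, φ x + (y - x) ⬝ᵥ g ≤ φ y := by
  simp only [IsSubgradientOn, dotProductDual_apply, dotProduct_comm g]

variable {d : ℕ}

theorem subdiffDomain_eq_subdiffNonempty (Z : Set (Fin d → ℝ)) (ω : (Fin d → ℝ) → ℝ) :
    subdiffDomain ω Z = subdiffNonempty Z ω := by
  ext x
  simp only [subdiffDomain, subdiffNonempty, Set.mem_ofPred_eq,
    (dotProductDual (Fin d)).surjective.exists, isSubgradientOn_dotProductDual_iff,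
    exists_and_left]

theorem isDistanceGenerating_dotProductDual {p : Seminorm ℝ (Fin d → ℝ)} {Z : Set (Fin d → ℝ)}
    {ω : (Fin d → ℝ) → ℝ} {gw : (Fin d → ℝ) → Fin d → ℝ} (hω : ConvexOn ℝ Z ω)
    (hωc : ContinuousOn ω Z)
    (hgw : ∀ x ∈ subdiffNonempty Z ω, ∀ y ∈ Z, ω x + (y - x) ⬝ᵥ gw x ≤ ω y)
    (hgwc : ContinuousOn gw (subdiffNonempty Z ω))
    (hstrong : ∀ x ∈ subdiffNonempty Z ω, ∀ y ∈ subdiffNonempty Z ω,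
      p (x - y) ^ 2 ≤ (x - y) ⬝ᵥ (gw x - gw y)) :
    IsDistanceGenerating p Z ω (fun x => dotProductDual (Fin d) (gw x)) := by
  rw [← subdiffDomain_eq_subdiffNonempty] at *
  refine ⟨hω, hωc, fun x hx => ?_, ?_, fun x hx y hy => ?_⟩
  · exact isSubgradientOn_dotProductDual_iff.2 ⟨subdiffDomain_subset hx, hgw x hx⟩
  · exact (dotProductDual (Fin d)).toLinearMap.continuous_of_finiteDimensional.comp_continuousOn
      hgwc
  · rw [← map_sub, dotProductDual_apply, dotProduct_comm]
    exact hstrong x hx y hy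

end Coordinates

/-- average-regret bound `G √(2Ω/T)` for generalized Mirror Descent with
uniform weights `θ^t = 1/T` and constant step size `γ = √(2Ω/((1/T)² G² T))`
(Theorem 5 of the paper specialized to uniform weights).  The update of `z^{t+1}` uses
only `z^t` and `f^t`, and the infimum over `Z` in the regret is expressed by
quantifying over `w ∈ Z`. -/
theorem mirror_descent_average_regret {d : ℕ}
    (Z : Set (Fin d → ℝ)) (hZconv : Convex ℝ Z) (hZcomp : IsCompact Z)
    (nrm : (Fin d → ℝ) → ℝ)
    (hnonneg : ∀ u, 0 ≤ nrm u)
    (hdefinite : ∀ u, nrm u = 0 → u = 0)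
    (hhom : ∀ (c : ℝ) (u : Fin d → ℝ), nrm (c • u) = |c| * nrm u)
    (htri : ∀ u v : Fin d → ℝ, nrm (u + v) ≤ nrm u + nrm v)
    (ω : (Fin d → ℝ) → ℝ) (hωconv : ConvexOn ℝ Z ω) (hωcont : ContinuousOn ω Z)
    (gw : (Fin d → ℝ) → (Fin d → ℝ))
    (hgwsel : ∀ z ∈ subdiffNonempty Z ω, ∀ z' ∈ Z, ω z + (z' - z) ⬝ᵥ gw z ≤ ω z')
    (hgwcont : ContinuousOn gw (subdiffNonempty Z ω))
    (hstrong : ∀ z' ∈ subdiffNonempty Z ω, ∀ z'' ∈ subdiffNonempty Z ω,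
      nrm (z' - z'') ^ 2 ≤ (z' - z'') ⬝ᵥ (gw z' - gw z''))
    (Om : ℝ) (hOm : Om = sSup (ω '' Z) - sInf (ω '' Z))
    (T : ℕ) (hT : 1 ≤ T)
    (f : ℕ → (Fin d → ℝ) → ℝ) (hfconv : ∀ t ∈ Finset.Icc 1 T, ConvexOn ℝ Z (f t))
    (gf : ℕ → (Fin d → ℝ) → (Fin d → ℝ))
    (hgfsel : ∀ t ∈ Finset.Icc 1 T, ∀ z ∈ Z, ∀ z' ∈ Z,
      f t z + (z' - z) ⬝ᵥ gf t z ≤ f t z')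
    (G : ℝ) (hG : 0 < G)
    (hgfbd : ∀ t ∈ Finset.Icc 1 T, ∀ z ∈ Z,
      sSup {r : ℝ | ∃ w, nrm w ≤ 1 ∧ r = w ⬝ᵥ gf t z} ≤ G)
    (γ : ℝ) (hγ : γ = Real.sqrt (2 * Om / ((1 / (T : ℝ)) ^ 2 * G ^ 2 * (T : ℝ))))
    (z : ℕ → Fin d → ℝ)
    (hz1 : z 1 ∈ Z ∧ ∀ w ∈ Z, ω (z 1) ≤ ω w)
    (hstep : ∀ t ∈ Finset.Icc 1 T, z (t + 1) ∈ Z ∧ ∀ w ∈ Z,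
      (γ • ((1 / (T : ℝ)) • gf t (z t)) - gw (z t)) ⬝ᵥ z (t + 1) + ω (z (t + 1))
        ≤ (γ • ((1 / (T : ℝ)) • gf t (z t)) - gw (z t)) ⬝ᵥ w + ω w) :
    ∀ w ∈ Z,
      (1 / (T : ℝ)) * ∑ t ∈ Finset.Icc 1 T, f t (z t)
          - (1 / (T : ℝ)) * ∑ t ∈ Finset.Icc 1 T, f t w
        ≤ G * Real.sqrt (2 * Om / (T : ℝ)) := by
  intro w hw
  let p : Seminorm ℝ (Fin d → ℝ) := Seminorm.of nrm htri hhom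
  let D := dotProductDual (Fin d)
  have hω : IsDistanceGenerating p Z ω (fun x => D (gw x)) :=
    isDistanceGenerating_dotProductDual hωconv hωcont hgwsel hgwcont hstrong
  have hz : IsMirrorDescent Z ω (fun x => D (gw x))
      (fun t => γ • (1 / (T : ℝ)) • D (gf t (z t))) z T := by
    refine ⟨hz1.1, hz1.2, fun t ht => ?_⟩
    simp only [IsMirrorStep, ← map_smul, ← map_sub]
    exact hstep t ht
  have hzZ : ∀ t ∈ Icc 1 T, z t ∈ Z := fun t ht =>
    subdiffDomain_subset (hz.mem_subdiffDomain hωconv (Icc_subset_Icc_right T.le_succ ht))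
  exact mirror_descent_average_regret_general hω hZcomp
    (fun x hx y hy => hOm ▸ sub_le_sSup_image_sub_sInf_image hZcomp hωcont hx hy) hT hG
    (fun t ht => dotProductDual_apply_le_of_sSup_le hdefinite (hgfbd t ht _ (hzZ t ht))) hγ
    (fun t ht => isSubgradientOn_dotProductDual_iff.2 ⟨hzZ t ht, hgfsel t ht _ (hzZ t ht)⟩) hz hw
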